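/- arXiv:2009.09885 — 3 statements merged into one kernel-verified Lean document; each statement's English description precedes it below -/
import Mathlib

section
/- Let f : B₃ → SL₂(ℤ) be any group homomorphism satisfying f(ā) = T and f(b̄) = (T·S·T)⁻¹. Then the kernel of f equals the subgroup of all integer powers of the element (ā·b̄·ā)⁻⁴ (i.e., ker f = zpowers((ā·b̄·ā)⁻⁴)), and the element (ā·b̄·ā)⁴ has infinite order in B₃; in particular, the kernel of f is an infinite cyclic group generated by (ā·b̄·ā)⁻⁴. -/
/-- The braid relator set: `a·b·a·(b·a·b)⁻¹` in the free group on two generators. -/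
def braidRel : Set (FreeGroup (Fin 2)) :=
  {FreeGroup.of 0 * FreeGroup.of 1 * FreeGroup.of 0 *
    (FreeGroup.of 1 * FreeGroup.of 0 * FreeGroup.of 1)⁻¹}

/-- The braid group on three strands, `B₃ = ⟨a, b ∣ a·b·a = b·a·b⟩`. -/
abbrev B3 : Type := PresentedGroup braidRel

/-- The image `ā` of the generator `a` in `B₃`. -/
def ba : B3 := PresentedGroup.of 0

/-- The image `b̄` of the generator `b` in `B₃`. -/
def bb : B3 := PresentedGroup.of 1

theorem b3_rel : ba * bb * ba = bb * ba * bb := by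
  have h : PresentedGroup.mk braidRel (FreeGroup.of 0 * FreeGroup.of 1 * FreeGroup.of 0 *
    (FreeGroup.of 1 * FreeGroup.of 0 * FreeGroup.of 1)⁻¹) = 1 :=
    PresentedGroup.one_of_mem rfl
  rw [map_mul, map_inv, mul_inv_eq_one] at h
  simp only [map_mul] at h
  exact h

def bU : B3 := ba * bb
def bD : B3 := ba * bb * ba
def bZ : B3 := bD * bD

theorem bZ_eq : bZ = bU * bU * bU := by
  have h := b3_rel
  calc bZ = (ba * bb * ba) * (ba * bb * ba) := rfl
    _ = (ba * bb * ba) * (bb * ba * bb) := by rw [← h]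
    _ = _ := by simp only [bU, mul_assoc]

theorem bZ_D : Commute bZ bD := by
  simp only [Commute, SemiconjBy, bZ, mul_assoc]

theorem bZ_U : Commute bZ bU := by
  simp only [Commute, SemiconjBy, bZ_eq, mul_assoc]

theorem bD_eq_a' : bD = bU * ba := rfl

def bM : Submonoid B3 := Submonoid.closure {ba⁻¹, bb}

def bP (g : B3) : Prop := ∃ (k : ℤ) (w : B3) (i j : ℕ), w ∈ bM ∧ i < 3 ∧ j < 2 ∧
  g = bZ ^ k * (bU ^ i * w * bD ^ j)

theorem bP_Z (n : ℤ) {g : B3} (h : bP g) : bP (bZ ^ n * g) := by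
  obtain ⟨k, w, i, j, hw, hi, hj, rfl⟩ := h
  exact ⟨n + k, w, i, j, hw, hi, hj, by rw [zpow_add]; simp only [mul_assoc]⟩

theorem bP_U {g : B3} (h : bP g) : bP (bU * g) := by
  obtain ⟨k, w, i, j, hw, hi, hj, rfl⟩ := h
  have hc : bU * bZ ^ k = bZ ^ k * bU := ((bZ_U.zpow_left k).eq).symm
  rw [← mul_assoc, hc, mul_assoc]
  apply bP_Z
  by_cases h2 : i = 2
  · subst h2
    refine ⟨1, w, 0, j, hw, by omega, hj, ?_⟩
    rw [bZ_eq]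
    simp only [pow_two, zpow_one, pow_zero, one_mul, mul_assoc]
  · refine ⟨0, w, i + 1, j, hw, by omega, hj, ?_⟩
    simp only [pow_succ', zpow_zero, one_mul, mul_assoc]

theorem bM_cases {w : B3} (hw : w ∈ bM) :
    w = 1 ∨ (∃ v ∈ bM, w = ba⁻¹ * v) ∨ (∃ v ∈ bM, w = bb * v) := by
  induction hw using Submonoid.closure_induction_left with
  | one => exact Or.inl rfl
  | mul_left x hx y hy _ =>
    rcases hx with rfl | rfl
    · exact Or.inr (Or.inl ⟨y, hy, rfl⟩)
    · exact Or.inr (Or.inr ⟨y, hy, rfl⟩)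

theorem a_mem : ba⁻¹ ∈ bM := Submonoid.subset_closure (by simp)
theorem b_mem : bb ∈ bM := Submonoid.subset_closure (by simp)

theorem bD_a : bD * ba⁻¹ = bU := by rw [bD_eq_a']; group

theorem bD_b : bD * bb = bU * bU := by
  simp only [bD, bU, mul_assoc]

theorem bD_U : bD * bU = bZ * ba⁻¹ := by
  have h : bU = bD * ba⁻¹ := bD_a.symm
  rw [bZ, mul_assoc, ← h]

theorem bD_UU : bD * (bU * bU) = bZ * bb := by
  rw [← bD_b, ← mul_assoc]; rfl

theorem bP_D {g : B3} (h : bP g) : bP (bD * g) := by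
  obtain ⟨k, w, i, j, hw, hi, hj, rfl⟩ := h
  have hc : bD * bZ ^ k = bZ ^ k * bD := ((bZ_D.zpow_left k).eq).symm
  rw [← mul_assoc, hc, mul_assoc]
  apply bP_Z
  interval_cases i
  · rcases bM_cases hw with rfl | ⟨v, hv, rfl⟩ | ⟨v, hv, rfl⟩
    · interval_cases j
      · exact ⟨0, 1, 0, 1, one_mem _, by omega, by omega, by simp⟩
      · exact ⟨1, 1, 0, 0, one_mem _, by omega, by omega, by simp [bZ]⟩
    · refine ⟨0, v, 1, j, hv, by omega, hj, ?_⟩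
      simp only [pow_zero, one_mul, zpow_zero, pow_one, ← mul_assoc, bD_a]
    · refine ⟨0, v, 2, j, hv, by omega, hj, ?_⟩
      simp only [pow_zero, one_mul, zpow_zero, pow_two, ← mul_assoc, bD_b]
  · refine ⟨1, ba⁻¹ * w, 0, j, mul_mem a_mem hw, by omega, hj, ?_⟩
    simp only [pow_zero, one_mul, zpow_one, pow_one, ← mul_assoc, bD_U]
  · refine ⟨1, bb * w, 0, j, mul_mem b_mem hw, by omega, hj, ?_⟩
    simp only [pow_zero, one_mul, zpow_one, pow_two, ← mul_assoc, ← bD_UU]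

theorem ai_eq : ba⁻¹ = bZ ^ (-1 : ℤ) * (bD * bU) := by rw [bD_U]; group
theorem b_eq : bb = bZ ^ (-1 : ℤ) * (bD * (bU * bU)) := by rw [bD_UU]; group
theorem a_eq : ba = bZ ^ (-1 : ℤ) * (bU * (bU * bD)) := by
  rw [bZ_eq, bD_eq_a']; group
theorem bi_eq : bb⁻¹ = bZ ^ (-1 : ℤ) * (bU * bD) := by
  have h : bU * bD = bZ * bb⁻¹ := by
    rw [eq_mul_inv_iff_mul_eq, mul_assoc, bD_b, bZ_eq, mul_assoc]
  rw [h]; group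

theorem bP_all (g : B3) : bP g := by
  have hg : g ∈ Subgroup.closure (Set.range (PresentedGroup.of : Fin 2 → B3)) := by
    rw [PresentedGroup.closure_range_of]; trivial
  induction hg using Subgroup.closure_induction_left with
  | one => exact ⟨0, 1, 0, 0, one_mem _, by omega, by omega, by simp⟩
  | mul_left x hx y _ ih =>
    obtain ⟨i, rfl⟩ := hx
    fin_cases i
    · change bP (ba * y)
      rw [a_eq]; simp only [mul_assoc]
      exact bP_Z _ (bP_U (bP_U (bP_D ih)))
    · change bP (bb * y)
      rw [b_eq]; simp only [mul_assoc]
      exact bP_Z _ (bP_D (bP_U (bP_U ih)))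
  | inv_mul_cancel x hx y _ ih =>
    obtain ⟨i, rfl⟩ := hx
    fin_cases i
    · change bP (ba⁻¹ * y)
      rw [ai_eq]; simp only [mul_assoc]
      exact bP_Z _ (bP_D (bP_U ih))
    · change bP (bb⁻¹ * y)
      rw [bi_eq]; simp only [mul_assoc]
      exact bP_Z _ (bP_U (bP_D ih))

theorem bD_inf : ¬ IsOfFinOrder bD := by
  let φ : B3 →* Multiplicative ℤ := PresentedGroup.toGroup
    (f := fun _ => Multiplicative.ofAdd (1 : ℤ)) (by
      intro r hr
      rw [braidRel, Set.mem_singleton_iff] at hr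
      subst hr
      simp only [map_mul, map_inv, FreeGroup.lift_apply_of]
      rfl)
  have hφ : φ bD = Multiplicative.ofAdd (3 : ℤ) := by
    have ha : φ ba = Multiplicative.ofAdd (1 : ℤ) := PresentedGroup.toGroup.of _
    have hb : φ bb = Multiplicative.ofAdd (1 : ℤ) := PresentedGroup.toGroup.of _
    rw [bD, map_mul, map_mul, ha, hb]; rfl
  intro h
  obtain ⟨n, hn, h1⟩ := isOfFinOrder_iff_pow_eq_one.1 h
  have h2 : φ (bD ^ n) = 1 := by rw [h1, map_one]
  rw [map_pow, hφ, ← ofAdd_nsmul] at h2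
  have h3 : n • (3 : ℤ) = 0 := h2
  simp at h3
  omega

section
open Matrix
variable (f : B3 →* Matrix.SpecialLinearGroup (Fin 2) ℤ)

theorem fa_inv (hfa : f ba = ModularGroup.T) :
    ((f ba⁻¹ : Matrix.SpecialLinearGroup (Fin 2) ℤ) : Matrix (Fin 2) (Fin 2) ℤ) = !![1, -1; 0, 1] := by
  rw [map_inv, hfa, ModularGroup.coe_T_inv]

theorem fb_coe (hfb : f bb = (ModularGroup.T * ModularGroup.S * ModularGroup.T)⁻¹) :
    ((f bb : Matrix.SpecialLinearGroup (Fin 2) ℤ) : Matrix (Fin 2) (Fin 2) ℤ) = !![1, 0; -1, 1] := by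
  rw [hfb]; decide

theorem fw_inv (hfa : f ba = ModularGroup.T)
    (hfb : f bb = (ModularGroup.T * ModularGroup.S * ModularGroup.T)⁻¹) {w : B3} (hw : w ∈ bM) :
    ∃ p q r s : ℤ, ((f w : Matrix.SpecialLinearGroup (Fin 2) ℤ) : Matrix (Fin 2) (Fin 2) ℤ)
      = !![p, -q; -r, s] ∧ 1 ≤ p ∧ 0 ≤ q ∧ 0 ≤ r ∧ 1 ≤ s ∧ (w = 1 ∨ 0 < q + r) := by
  induction hw using Submonoid.closure_induction_left with
  | one => exact ⟨1, 0, 0, 1, by simp [Matrix.one_fin_two], by simp⟩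
  | mul_left x hx y hy ih =>
    obtain ⟨p, q, r, s, h, h1, h2, h3, h4, -⟩ := ih
    rcases hx with rfl | rfl
    · refine ⟨p + r, q + s, r, s, ?_, by omega, by omega, by omega, by omega, Or.inr (by omega)⟩
      rw [map_mul]
      refine (Matrix.SpecialLinearGroup.coe_mul _ _).trans ?_
      rw [h, fa_inv f hfa]
      ext i j; fin_cases i <;> fin_cases j <;> simp <;> ring
    · refine ⟨p, q, p + r, q + s, ?_, by omega, by omega, by omega, by omega, Or.inr (by omega)⟩
      rw [map_mul]
      refine (Matrix.SpecialLinearGroup.coe_mul _ _).trans ?_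
      rw [h, fb_coe f hfb]
      ext i j; fin_cases i <;> fin_cases j <;> simp <;> ring

end


theorem kernel_of_braid_to_SL2Z
    (f : B3 →* Matrix.SpecialLinearGroup (Fin 2) ℤ)
    (hfa : f ba = ModularGroup.T)
    (hfb : f bb = (ModularGroup.T * ModularGroup.S * ModularGroup.T)⁻¹) :
    f.ker = Subgroup.zpowers ((ba * bb * ba) ^ (-4 : ℤ)) ∧
      ¬ IsOfFinOrder ((ba * bb * ba) ^ (4 : ℕ)) := by
  have hD : f bD = ModularGroup.S⁻¹ := by
    rw [bD, map_mul, map_mul, hfa, hfb]; decide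
  have hU : f bU = ModularGroup.S⁻¹ * ModularGroup.T⁻¹ := by
    rw [bU, map_mul, hfa, hfb]; decide
  have hZ : f bZ = -1 := by
    rw [bZ, map_mul, hD]; decide
  have hU0 : ((f bU : Matrix.SpecialLinearGroup (Fin 2) ℤ) : Matrix (Fin 2) (Fin 2) ℤ)
      = !![0, 1; -1, 1] := by rw [hU]; decide
  have hD0 : ((f bD : Matrix.SpecialLinearGroup (Fin 2) ℤ) : Matrix (Fin 2) (Fin 2) ℤ)
      = !![0, 1; -1, 0] := by rw [hD]; decide
  change f.ker = Subgroup.zpowers (bD ^ (-4 : ℤ)) ∧ ¬ IsOfFinOrder (bD ^ (4 : ℕ))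
  refine ⟨le_antisymm ?_ ?_, ?_⟩
  · intro g hg
    rw [MonoidHom.mem_ker] at hg
    obtain ⟨k, w, i, j, hw, hi, hj, rfl⟩ := bP_all g
    obtain ⟨p, q, r, s, h, h1, h2, h3, h4, h5⟩ := fw_inv f hfa hfb hw
    rw [map_mul, map_zpow, hZ] at hg
    have key : ∀ ε : ℤ, (ε = 1 ∨ ε = -1) →
        ((f (bU ^ i * w * bD ^ j) : Matrix.SpecialLinearGroup (Fin 2) ℤ) :
          Matrix (Fin 2) (Fin 2) ℤ) = !![ε, 0; 0, ε] → i = 0 ∧ j = 0 ∧ w = 1 ∧ ε = 1 := by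
      intro ε hε he
      simp only [map_mul, map_pow, Matrix.SpecialLinearGroup.coe_mul,
        Matrix.SpecialLinearGroup.coe_pow, h, hU0, hD0] at he
      have e00 := congrFun (congrFun he 0) 0
      have e01 := congrFun (congrFun he 0) 1
      have e10 := congrFun (congrFun he 1) 0
      have e11 := congrFun (congrFun he 1) 1
      interval_cases i <;> interval_cases j <;>
        simp [pow_two] at e00 e01 e10 e11 <;>
        first
        | omega
        | (refine ⟨rfl, rfl, ?_, by omega⟩
           rcases h5 with h5 | h5
           · exact h5
           · omega)
    rcases Int.even_or_odd k with hk | hk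
    · rw [hk.neg_one_zpow, one_mul] at hg
      obtain ⟨rfl, rfl, rfl, -⟩ := key 1 (Or.inl rfl) (by rw [hg]; decide)
      obtain ⟨m, rfl⟩ := hk
      refine ⟨-m, ?_⟩
      simp only [bZ, pow_zero, mul_one]
      rw [← pow_two, ← zpow_natCast, ← zpow_mul, ← zpow_mul]
      congr 1; push_cast; ring
    · rw [hk.neg_one_zpow] at hg
      have hg' : f (bU ^ i * w * bD ^ j) = -1 := by
        rw [neg_one_mul] at hg
        rw [← hg, neg_neg]
      have := key (-1) (Or.inr rfl) (by rw [hg']; decide)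
      omega
  · rw [Subgroup.zpowers_le, MonoidHom.mem_ker, map_zpow, hD]
    decide
  · intro h
    exact bD_inf (h.of_pow (by norm_num))
end

section
/- There exists a surjective group homomorphism f : B₃ → SL₂(ℤ) such that f(ā) = T and f(b̄) = (T·S·T)⁻¹; moreover, this homomorphism satisfies f((ā·b̄·ā)⁻¹) = S. -/
theorem ST_rel : (ModularGroup.T * ModularGroup.S * ModularGroup.T) * ModularGroup.S *
    ModularGroup.T = (ModularGroup.S : Matrix.SpecialLinearGroup (Fin 2) ℤ) := by
  decide

theorem exists_surjective_braid_to_SL2Z :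
    ∃ f : B3 →* Matrix.SpecialLinearGroup (Fin 2) ℤ,
      Function.Surjective f ∧
      f ba = ModularGroup.T ∧
      f bb = (ModularGroup.T * ModularGroup.S * ModularGroup.T)⁻¹ ∧
      f ((ba * bb * ba)⁻¹) = ModularGroup.S := by
  let g : Fin 2 → Matrix.SpecialLinearGroup (Fin 2) ℤ :=
    ![ModularGroup.T, (ModularGroup.T * ModularGroup.S * ModularGroup.T)⁻¹]
  have hg : ∀ r ∈ braidRel, FreeGroup.lift g r = 1 := by
    intro r hr
    rw [braidRel, Set.mem_singleton_iff] at hr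
    subst hr
    have h := ST_rel
    simp only [map_mul, map_inv, FreeGroup.lift_apply_of, g, Matrix.cons_val_zero,
      Matrix.cons_val_one]
    rw [mul_inv_eq_one, ← inv_inj]
    calc _ = (ModularGroup.S : Matrix.SpecialLinearGroup (Fin 2) ℤ) := by group
      _ = _ := h.symm
      _ = _ := by group
  let f := PresentedGroup.toGroup hg
  have ha : f ba = ModularGroup.T := PresentedGroup.toGroup.of hg
  have hb : f bb = (ModularGroup.T * ModularGroup.S * ModularGroup.T)⁻¹ :=
    PresentedGroup.toGroup.of hg
  have hS : f ((ba * bb * ba)⁻¹) = ModularGroup.S := by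
    rw [map_inv, map_mul, map_mul, ha, hb]; group
  refine ⟨f, ?_, ha, hb, hS⟩
  rw [← MonoidHom.range_eq_top, eq_top_iff, ← SpecialLinearGroup.SL2Z_generators,
    Subgroup.closure_le]
  rintro x (rfl | rfl)
  · exact ⟨_, hS⟩
  · exact ⟨_, ha⟩
end

section
/- Let σ : F₂ → F₂ be the unique group endomorphism with σ(α) = α·β·α⁻¹ and σ(β) = α⁻¹, and let Θ = α·β·α⁻¹·β⁻¹ ∈ F₂. Then σ(Θ) = Θ, and the fourth iterate of σ is conjugation by Θ: for every x ∈ F₂, σ(σ(σ(σ(x)))) = Θ·x·Θ⁻¹. -/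
/-- The free group on two generators. -/
abbrev F2 : Type := FreeGroup (Fin 2)

/-- The first generator of the free group F2. -/
def fα : F2 := FreeGroup.of 0

/-- The second generator of the free group F2. -/
def fβ : F2 := FreeGroup.of 1

theorem fourth_power_is_inner
    (σ : F2 →* F2)
    (hσα : σ fα = fα * fβ * fα⁻¹) (hσβ : σ fβ = fα⁻¹) :
    σ (fα * fβ * fα⁻¹ * fβ⁻¹) = fα * fβ * fα⁻¹ * fβ⁻¹ ∧
    ∀ x : F2, σ (σ (σ (σ x)))
      = (fα * fβ * fα⁻¹ * fβ⁻¹) * x * (fα * fβ * fα⁻¹ * fβ⁻¹)⁻¹ := by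
  refine ⟨by simp only [map_mul, map_inv, hσα, hσβ]; group, fun x => ?_⟩
  have key : ((σ.comp σ).comp (σ.comp σ)) =
      (MulAut.conj (fα * fβ * fα⁻¹ * fβ⁻¹)).toMonoidHom := by
    refine FreeGroup.ext_hom _ _ fun i => ?_
    fin_cases i
    · change σ (σ (σ (σ fα))) = (fα * fβ * fα⁻¹ * fβ⁻¹) * fα * (fα * fβ * fα⁻¹ * fβ⁻¹)⁻¹
      simp only [map_mul, map_inv, hσα, hσβ]
      group
    · change σ (σ (σ (σ fβ))) = (fα * fβ * fα⁻¹ * fβ⁻¹) * fβ * (fα * fβ * fα⁻¹ * fβ⁻¹)⁻¹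
      simp only [map_mul, map_inv, hσα, hσβ]
      group
  exact DFunLike.congr_fun key x
end
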